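/- In the N-player (n,m)-Bingo game with fixed cards c_1,…,c_N, for every k with 0 ≤ k ≤ m·n the probability that the game has ended within k calls satisfies P(B_N ≤ k) = Σ_{∅ ≠ Y ⊆ 𝓛_N} (−1)^{|Y|+1} · C(k, m(Y)) / C(m·n, m(Y)), where C(a,b) denotes the binomial coefficient. -/

import Mathlib

open Finset

/-- The row of an `n × n` Bingo board through index `i`. -/
def bingoRow (n : ℕ) (i : Fin n) : Finset (Fin n × Fin n) :=
  Finset.univ.filter (fun s => s.1 = i)

/-- The column of an `n × n` Bingo board through index `j`. -/
def bingoCol (n : ℕ) (j : Fin n) : Finset (Fin n × Fin n) :=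
  Finset.univ.filter (fun s => s.2 = j)

/-- The main diagonal `{(i,i)}`. -/
def bingoDiag (n : ℕ) : Finset (Fin n × Fin n) :=
  Finset.univ.filter (fun s => (s.2 : ℕ) = (s.1 : ℕ))

/-- The anti-diagonal `{(i, n-1-i)}`. -/
def bingoAntiDiag (n : ℕ) : Finset (Fin n × Fin n) :=
  Finset.univ.filter (fun s => (s.2 : ℕ) = n - 1 - (s.1 : ℕ))

/-- The set `𝓛` of winning lines: `n` rows, `n` columns and the two diagonals. -/
def bingoLines (n : ℕ) : Finset (Finset (Fin n × Fin n)) :=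
  (Finset.univ.image (bingoRow n)) ∪ (Finset.univ.image (bingoCol n)) ∪
    {bingoDiag n, bingoAntiDiag n}

/-- An `(n,m)`-Bingo card: an injective assignment of numbers such that column `j`
only uses numbers in `[m*j, m*(j+1))`. -/
def IsBingoCard (n m : ℕ) (c : Fin n × Fin n → Fin (m * n)) : Prop :=
  Function.Injective c ∧
    ∀ i j : Fin n, m * (j : ℕ) ≤ (c (i, j) : ℕ) ∧ (c (i, j) : ℕ) < m * ((j : ℕ) + 1)

/-- Bingo is achieved within the first `k` calls of `σ`: some winning line has all of its
numbers among `σ 0, …, σ (k-1)`. -/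
def BingoWins (n m : ℕ) (c : Fin n × Fin n → Fin (m * n))
    (σ : Equiv.Perm (Fin (m * n))) (k : ℕ) : Prop :=
  ∃ L ∈ bingoLines n, ∀ s ∈ L, ∃ t : Fin (m * n), (t : ℕ) < k ∧ σ t = c s

/-- `S_n = ∑_{∅ ≠ X ⊆ 𝓛} (-1)^{|X|+1} / (m(X)+1)`, where `m(X)` is the number of squares
covered by the union of the lines in `X`. -/
noncomputable def Sn (n : ℕ) : ℝ :=
  ∑ X ∈ (bingoLines n).powerset.filter (fun X => X.Nonempty),
    (-1 : ℝ) ^ (X.card + 1) / (((X.sup id).card : ℝ) + 1)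

/-- The set `𝓛_N` of distinct number-sets of winning lines across the `N` cards. -/
def bingoLinesN (n m N : ℕ) (c : Fin N → Fin n × Fin n → Fin (m * n)) :
    Finset (Finset (Fin (m * n))) :=
  ((Finset.univ : Finset (Fin N)) ×ˢ bingoLines n).image
    (fun q => q.2.image (c q.1))

/-- Some number-set in `𝓛_N` is contained among the first `k` calls of `σ`. -/
def BingoWinsN (n m N : ℕ) (c : Fin N → Fin n × Fin n → Fin (m * n))
    (σ : Equiv.Perm (Fin (m * n))) (k : ℕ) : Prop :=
  ∃ A ∈ bingoLinesN n m N c, ∀ x ∈ A, ∃ t : Fin (m * n), (t : ℕ) < k ∧ σ t = x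

/-- `S_{n,N}` for a fixed realization of the `N` cards. -/
noncomputable def SnN (n m N : ℕ) (c : Fin N → Fin n × Fin n → Fin (m * n)) : ℝ :=
  ∑ Y ∈ (bingoLinesN n m N c).powerset.filter (fun Y => Y.Nonempty),
    (-1 : ℝ) ^ (Y.card + 1) / (((Y.sup id).card : ℝ) + 1)

lemma bingo_count_invariant (M : ℕ) (K U V : Finset (Fin M)) (h : U.card = V.card) :
    ((univ : Finset (Equiv.Perm (Fin M))).filter (fun σ : Equiv.Perm (Fin M) => U ⊆ K.image σ)).card =
    ((univ : Finset (Equiv.Perm (Fin M))).filter (fun σ : Equiv.Perm (Fin M) => V ⊆ K.image σ)).card := by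
  classical
  have e : {x // x ∈ U} ≃ {x // x ∈ V} := Fintype.equivOfCardEq (by simpa using h)
  let τ : Equiv.Perm (Fin M) := e.extendSubtype
  have hτ : U.image τ = V := by
    apply Finset.eq_of_subset_of_card_le
    · intro x hx
      obtain ⟨y, hy, rfl⟩ := Finset.mem_image.1 hx
      exact e.extendSubtype_mem y hy
    · rw [Finset.card_image_of_injective _ τ.injective, h]
  refine Finset.card_equiv (Equiv.mulLeft τ) ?_
  intro σ
  simp only [mem_filter, mem_univ, true_and, Equiv.coe_mulLeft]
  have : K.image (τ * σ : Equiv.Perm (Fin M)) = (K.image σ).image τ := by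
    rw [Finset.image_image]; rfl
  rw [this, ← hτ, Finset.image_subset_image_iff τ.injective]

lemma bingo_count (M : ℕ) (K U : Finset (Fin M)) :
    M.choose U.card *
    ((univ : Finset (Equiv.Perm (Fin M))).filter (fun σ : Equiv.Perm (Fin M) => U ⊆ K.image σ)).card =
    M.factorial * K.card.choose U.card := by
  classical
  have h1 : ∑ V ∈ powersetCard U.card (univ : Finset (Fin M)),
      ((univ : Finset (Equiv.Perm (Fin M))).filter (fun σ : Equiv.Perm (Fin M) => V ⊆ K.image σ)).card
      = M.choose U.card *
    ((univ : Finset (Equiv.Perm (Fin M))).filter (fun σ : Equiv.Perm (Fin M) => U ⊆ K.image σ)).card := by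
    rw [Finset.sum_congr rfl (fun V hV => bingo_count_invariant M K V U
      (Finset.mem_powersetCard.1 hV).2)]
    simp
  rw [← h1]
  simp only [Finset.card_filter]
  rw [Finset.sum_comm]
  have : ∀ σ ∈ (univ : Finset (Equiv.Perm (Fin M))),
      (∑ V ∈ powersetCard U.card (univ : Finset (Fin M)), if V ⊆ K.image σ then 1 else 0)
      = K.card.choose U.card := by
    intro σ _
    rw [← Finset.card_filter, ← Finset.card_image_of_injective K σ.injective,
      ← Finset.card_powersetCard]
    congr 1
    ext V
    simp [Finset.mem_powersetCard, and_comm]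
  rw [Finset.sum_congr rfl this]
  simp [Fintype.card_perm]

lemma bingo_line_nonempty (n : ℕ) (hn : 1 ≤ n) (L : Finset (Fin n × Fin n))
    (hL : L ∈ bingoLines n) : L.Nonempty := by
  simp only [bingoLines, mem_union, mem_image, mem_univ, true_and, mem_insert,
    mem_singleton] at hL
  rcases hL with (⟨i, rfl⟩ | ⟨i, rfl⟩) | rfl | rfl
  · exact ⟨(i, i), by simp [bingoRow]⟩
  · exact ⟨(i, i), by simp [bingoCol]⟩
  · exact ⟨(⟨0, hn⟩, ⟨0, hn⟩), by simp [bingoDiag]⟩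
  · exact ⟨(⟨0, hn⟩, ⟨n - 1, by omega⟩), by simp [bingoAntiDiag]⟩

/-- inclusion-exclusion formula for the CDF `P(B_N ≤ k)` in the `N`-player
`(n,m)`-Bingo game with fixed cards. -/
theorem bingo_multiplayer_cdf (n m N : ℕ) (hn : 1 ≤ n) (hm : n ≤ m) (hN : 1 ≤ N)
    (c : Fin N → Fin n × Fin n → Fin (m * n)) (hc : ∀ a, IsBingoCard n m (c a))
    (B : Equiv.Perm (Fin (m * n)) → ℕ)
    (hB : ∀ σ, IsLeast {k : ℕ | 1 ≤ k ∧ BingoWinsN n m N c σ k} (B σ))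
    (k : ℕ) (hk : k ≤ m * n) :
    (((Finset.univ : Finset (Equiv.Perm (Fin (m * n)))).filter
        (fun σ => B σ ≤ k)).card : ℝ) / (Nat.factorial (m * n)) =
      ∑ Y ∈ (bingoLinesN n m N c).powerset.filter (fun Y => Y.Nonempty),
        (-1 : ℝ) ^ (Y.card + 1) *
          (Nat.choose k ((Y.sup id).card) : ℝ) / (Nat.choose (m * n) ((Y.sup id).card) : ℝ) := by
  classical
  set K : Finset (Fin (m * n)) := univ.filter (fun t => (t : ℕ) < k) with hK
  have hKc : K.card = k := by
    rw [hK, Fin.card_filter_val_lt]; omega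
  let S : Finset (Fin (m * n)) → Finset (Equiv.Perm (Fin (m * n))) :=
    fun A => univ.filter (fun σ : Equiv.Perm (Fin (m * n)) => A ⊆ K.image σ)
  have hsub : ∀ (A : Finset (Fin (m * n))) (σ : Equiv.Perm (Fin (m * n))),
      A ⊆ K.image σ ↔ ∀ x ∈ A, ∃ t : Fin (m * n), (t : ℕ) < k ∧ σ t = x := by
    intro A σ
    simp [hK, Finset.subset_iff]
  have hev : (univ.filter (fun σ => B σ ≤ k)) = (bingoLinesN n m N c).biUnion S := by
    ext σ
    simp only [mem_filter, mem_univ, true_and, mem_biUnion, S, hsub]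
    constructor
    · intro h
      obtain ⟨-, A, hA, hA2⟩ := (hB σ).1
      refine ⟨A, hA, fun x hx => ?_⟩
      obtain ⟨t, ht, ht2⟩ := hA2 x hx
      exact ⟨t, lt_of_lt_of_le ht h, ht2⟩
    · rintro ⟨A, hA, hA2⟩
      refine (hB σ).2 ⟨?_, A, hA, hA2⟩
      obtain ⟨q, hq, rfl⟩ := Finset.mem_image.1 hA
      obtain ⟨x, hx⟩ := (bingo_line_nonempty n hn q.2 (Finset.mem_product.1 hq).2).image (c q.1)
      obtain ⟨t, ht, -⟩ := hA2 x hx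
      omega
  have hie := congrArg (Int.cast : ℤ → ℝ)
    (Finset.inclusion_exclusion_card_biUnion (bingoLinesN n m N c) S)
  rw [hev]
  push_cast at hie
  rw [hie, Finset.sum_div,
    ← Finset.sum_coe_sort ((bingoLinesN n m N c).powerset.filter (fun Y => Y.Nonempty))]
  refine Finset.sum_congr rfl ?_
  rintro ⟨Y, hY⟩ -
  have hinf : ∀ h : Y.Nonempty, Y.inf' h S = univ.filter (fun σ : Equiv.Perm (Fin (m * n)) => Y.sup id ⊆ K.image σ) := by
    intro h
    ext σ
    rw [Finset.mem_inf']
    simp only [S, mem_filter, mem_univ, true_and]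
    rw [← Finset.le_iff_subset, Finset.sup_le_iff]
    rfl
  simp only [hinf]
  have hcnt := bingo_count (m * n) K (Y.sup id)
  rw [hKc] at hcnt
  have hpos : 0 < (m * n).choose (Y.sup id).card :=
    Nat.choose_pos (by simpa using Finset.card_le_univ (Y.sup id))
  have h1 : ((m * n).choose (Y.sup id).card : ℝ) ≠ 0 := by exact_mod_cast hpos.ne'
  have h2 : ((m * n).factorial : ℝ) ≠ 0 := by exact_mod_cast (Nat.factorial_pos _).ne'
  have h3 := congrArg (Nat.cast : ℕ → ℝ) hcnt
  push_cast at h3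
  rw [div_eq_div_iff h2 h1]
  linear_combination (-1 : ℝ) ^ (Y.card + 1) * h3
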